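/- Under assumptions (A1)-(A3), any global optimal solution p* of the constrained price optimization problem min_{p ∈ Ω} Q(p) is profitable, i.e., p* ≥ c componentwise. -/

import Mathlib

open Matrix

theorem constrained_optimum_profitable {n k : ℕ}
    (D : Matrix (Fin n) (Fin n) ℝ) (a c p0 δ : Fin n → ℝ)
    (S : Matrix (Fin n) (Fin n) ℝ) (hS : S = D + Dᵀ)
    (hPD : S.PosDef) (hoff : ∀ i j : Fin n, i ≠ j → S i j ≤ 0)
    (ha : ∀ i, 0 < a i) (hc : ∀ i, 0 < c i)
    (hdc : ∀ i, 0 ≤ (a - D.mulVec c) i)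
    (hδ : ∀ i, 0 ≤ δ i) (hA3 : ∀ i, c i ≤ p0 i - δ i)
    (Q : (Fin n → ℝ) → ℝ)
    (hQ : ∀ p, Q p = (1/2) * (p ⬝ᵥ S.mulVec p) - (a + Dᵀ.mulVec c) ⬝ᵥ p)
    (Ω : Set (Fin n → ℝ))
    (hΩ : Ω = {p | {i | p i ≠ p0 i}.ncard ≤ k ∧
      ∀ i, p i = p0 i ∨ p0 i + δ i ≤ p i ∨ p i ≤ p0 i - δ i})
    (pstar : Fin n → ℝ) (hfeas : pstar ∈ Ω)
    (hopt : ∀ p ∈ Ω, Q pstar ≤ Q p) :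
    ∀ i, c i ≤ pstar i := by
  set u : Fin n → ℝ := fun i => max (c i - pstar i) 0 with hu
  set v : Fin n → ℝ := fun i => max (pstar i - c i) 0 with hv
  have hu0 : ∀ i, 0 ≤ u i := fun i => le_max_right _ _
  have hv0 : ∀ i, 0 ≤ v i := fun i => le_max_right _ _
  have huv : ∀ i, u i * v i = 0 := by
    intro i
    rcases le_total (c i) (pstar i) with h | h
    · have : u i = 0 := max_eq_right (by linarith)
      rw [this, zero_mul]
    · have : v i = 0 := max_eq_right (by linarith)
      rw [this, mul_zero]
  have hp : pstar = c + v - u := by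
    funext i
    simp only [hu, hv, Pi.add_apply, Pi.sub_apply]
    rcases le_total (c i) (pstar i) with h | h
    · rw [max_eq_left (by linarith : 0 ≤ pstar i - c i),
        max_eq_right (by linarith : c i - pstar i ≤ 0)]; ring
    · rw [max_eq_right (by linarith : pstar i - c i ≤ 0),
        max_eq_left (by linarith : 0 ≤ c i - pstar i)]; ring
  have hsupp : ∀ i, c i ≤ pstar i ∨ ((pstar + u) i = c i ∧ pstar i < c i) := by
    intro i
    rcases le_or_gt (c i) (pstar i) with h | h
    · exact Or.inl h
    · refine Or.inr ⟨?_, h⟩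
      have : u i = c i - pstar i := max_eq_left (by linarith)
      rw [Pi.add_apply, this]; ring
  have hsame : ∀ i, c i ≤ pstar i → (pstar + u) i = pstar i := by
    intro i h
    have : u i = 0 := max_eq_right (by linarith)
    rw [Pi.add_apply, this, add_zero]
  have hq : pstar + u ∈ Ω := by
    rw [hΩ] at hfeas ⊢
    obtain ⟨h1, h2⟩ := hfeas
    refine ⟨le_trans (Set.ncard_le_ncard ?_ (Set.toFinite _)) h1, ?_⟩
    · intro i hi
      simp only [Set.mem_ofPred_eq] at hi ⊢
      rcases hsupp i with h | ⟨_, h⟩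
      · rwa [hsame i h] at hi
      · have := hA3 i
        have := hδ i
        exact ne_of_lt (by linarith)
    · intro i
      rcases hsupp i with h | ⟨h, _⟩
      · rw [hsame i h]; exact h2 i
      · rw [h]; exact Or.inr (Or.inr (hA3 i))
  have hle := hopt _ hq
  have hST : Sᵀ = S := by
    rw [hS, transpose_add, transpose_transpose, add_comm]
  have hsym : ∀ x y : Fin n → ℝ, x ⬝ᵥ S.mulVec y = y ⬝ᵥ S.mulVec x := by
    intro x y
    rw [dotProduct_mulVec, ← mulVec_transpose, hST, dotProduct_comm]
  have hneg : u ⬝ᵥ S.mulVec v ≤ 0 := by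
    simp only [dotProduct, mulVec, Finset.mul_sum]
    refine Finset.sum_nonpos fun i _ => Finset.sum_nonpos fun j _ => ?_
    by_cases hij : i = j
    · subst hij
      have := huv i
      have : u i * (S i i * v i) = S i i * (u i * v i) := by ring
      rw [this, huv i, mul_zero]
    · exact mul_nonpos_of_nonneg_of_nonpos (hu0 i)
        (mul_nonpos_of_nonpos_of_nonneg (hoff i j hij) (hv0 j))
  have hcost : 0 ≤ u ⬝ᵥ (a - D.mulVec c) :=
    Finset.sum_nonneg fun i _ => mul_nonneg (hu0 i) (hdc i)
  have hSc : u ⬝ᵥ S.mulVec c = u ⬝ᵥ D.mulVec c + u ⬝ᵥ Dᵀ.mulVec c := by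
    rw [hS, add_mulVec, dotProduct_add]
  have hSp : u ⬝ᵥ S.mulVec pstar
      = u ⬝ᵥ S.mulVec c + u ⬝ᵥ S.mulVec v - u ⬝ᵥ S.mulVec u := by
    conv_lhs => rw [hp]
    rw [mulVec_sub, mulVec_add, dotProduct_sub, dotProduct_add]
  have hquad : u ⬝ᵥ S.mulVec u ≤ 0 := by
    rw [hQ, hQ] at hle
    simp only [mulVec_add, dotProduct_add, add_dotProduct] at hle
    rw [hsym pstar u, dotProduct_comm a u, dotProduct_comm (Dᵀ.mulVec c) u] at hle
    rw [dotProduct_sub] at hcost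
    linarith
  have huz : u = 0 := by
    by_contra hne
    have := hPD.dotProduct_mulVec_pos hne
    rw [star_trivial] at this
    linarith
  intro i
  have h1 : c i - pstar i ≤ u i := le_max_left _ _
  rw [huz, Pi.zero_apply] at h1
  linarith
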